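/- Let G be the simple graph on vertex set {1, 2, …, 9} with edge set {{1,7},{1,4},{2,8},{2,5},{3,9},{3,6},{7,5},{7,6},{8,4},{8,6},{9,4},{9,5}}, let M be the collection of stable sets of G that are maximal with respect to inclusion, and let P ⊆ ℝ^9 be the convex hull of the indicator vectors { e_S : S ∈ M }. Let A = {1,2,3} and B = {4,5,6} (both lie in M). Then: (1) the segment [e_A, e_B] is NOT an extreme subset (face) of P, so e_A and e_B do not form an edge of P; and yet (2) for all C, D ∈ M, the equality e_A + e_B = e_C + e_D implies {C, D} = {A, B}. Hence the edge criterion 'e_A and e_B form an edge iff e_A + e_B has a unique decomposition as a sum of two vertices' fails for the polytope built from the inclusion-maximal stable sets. -/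

import Mathlib

/-- Indicator vector of a finite subset of `Fin 9`, as a vector in `ℝ^9`. -/
def indVec (A : Finset (Fin 9)) : Fin 9 → ℝ := fun v => if v ∈ A then 1 else 0

/-- A set of vertices is stable if no two of its elements are adjacent. -/
def IsStable (G : SimpleGraph (Fin 9)) (A : Finset (Fin 9)) : Prop :=
  ∀ v ∈ A, ∀ w ∈ A, ¬ G.Adj v w

/-- The graph of Remark `maximal-sets-polytope-graph` on the vertex set `{1, …, 9}`
(here the vertices `1, …, 9` are represented by `0, …, 8 : Fin 9`), with edge set
`{{1,7},{1,4},{2,8},{2,5},{3,9},{3,6},{7,5},{7,6},{8,4},{8,6},{9,4},{9,5}}`. -/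
def G14 : SimpleGraph (Fin 9) :=
  SimpleGraph.fromEdgeSet
    {s(0, 6), s(0, 3), s(1, 7), s(1, 4), s(2, 8), s(2, 5),
     s(6, 4), s(6, 5), s(7, 3), s(7, 5), s(8, 3), s(8, 4)}

/-- The collection of inclusion-maximal stable sets of `G14`. -/
def M14 : Set (Finset (Fin 9)) :=
  {S | IsStable G14 S ∧ ∀ T : Finset (Fin 9), IsStable G14 T → S ⊆ T → S = T}

/-- The polytope spanned by the indicator vectors of the inclusion-maximal stable sets. -/
def P14 : Set (Fin 9 → ℝ) :=
  convexHull ℝ {x | ∃ S ∈ M14, x = indVec S}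

theorem G14_adj_iff (v w : Fin 9) : G14.Adj v w ↔
    s(v, w) ∈ ({s(0, 6), s(0, 3), s(1, 7), s(1, 4), s(2, 8), s(2, 5),
     s(6, 4), s(6, 5), s(7, 3), s(7, 5), s(8, 3), s(8, 4)} : Finset (Sym2 (Fin 9))) ∧ v ≠ w := by
  simp only [G14, SimpleGraph.fromEdgeSet_adj, Finset.mem_insert, Finset.mem_singleton,
    Set.mem_insert_iff, Set.mem_singleton_iff]

instance decAdjG14 : DecidableRel G14.Adj := fun v w => decidable_of_iff' _ (G14_adj_iff v w)

theorem mem_M14_iff (S : Finset (Fin 9)) : S ∈ M14 ↔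
    (∀ v ∈ S, ∀ w ∈ S, ¬ G14.Adj v w) ∧ ∀ v, v ∉ S → ∃ w ∈ S, G14.Adj v w := by
  constructor
  · rintro ⟨h1, h2⟩
    refine ⟨h1, fun v hv => ?_⟩
    by_contra! hc
    have hst : IsStable G14 (insert v S) := by
      intro a ha b hb
      rcases Finset.mem_insert.1 ha with rfl | ha' <;> rcases Finset.mem_insert.1 hb with rfl | hb'
      · exact G14.loopless.irrefl _
      · exact hc b hb'
      · exact fun h => hc a ha' h.symm
      · exact h1 a ha' b hb'
    have := h2 _ hst (Finset.subset_insert v S)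
    exact hv (this ▸ Finset.mem_insert_self v S)
  · rintro ⟨h1, h2⟩
    refine ⟨h1, fun T hT hST => Finset.Subset.antisymm hST fun v hv => ?_⟩
    by_contra hvS
    obtain ⟨w, hw, ha⟩ := h2 v hvS
    exact hT v hv w (hST hw) ha

theorem M14_split : ∀ C ∈ ({0, 1, 2, 3, 4, 5} : Finset (Fin 9)).powerset,
    ((∀ v ∈ C, ∀ w ∈ C, ¬ G14.Adj v w) ∧ ∀ v, v ∉ C → ∃ w ∈ C, G14.Adj v w) →
    ((∀ v ∈ ({0, 1, 2, 3, 4, 5} : Finset (Fin 9)) \ C,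
        ∀ w ∈ ({0, 1, 2, 3, 4, 5} : Finset (Fin 9)) \ C, ¬ G14.Adj v w) ∧
      ∀ v, v ∉ ({0, 1, 2, 3, 4, 5} : Finset (Fin 9)) \ C →
        ∃ w ∈ ({0, 1, 2, 3, 4, 5} : Finset (Fin 9)) \ C, G14.Adj v w) →
    (C = {0, 1, 2} ∨ C = {3, 4, 5}) := by
  decide +kernel

/-- For the polytope of inclusion-maximal stable sets of `G14`, the sets
`A = {1,2,3}` and `B = {4,5,6}` (represented as `{0,1,2}` and `{3,4,5}`) both lie in
`M14`, the segment `[e_A, e_B]` is *not* a face of the polytope, and yet `e_A + e_B` has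
a unique decomposition as a sum of two vertices.  Hence the edge criterion (E) fails for
this polytope. -/
theorem maximal_stable_polytope_fails_edge_criterion :
    ({0, 1, 2} : Finset (Fin 9)) ∈ M14 ∧ ({3, 4, 5} : Finset (Fin 9)) ∈ M14 ∧
    ¬ IsExtreme ℝ P14
        (segment ℝ (indVec ({0, 1, 2} : Finset (Fin 9)))
          (indVec ({3, 4, 5} : Finset (Fin 9)))) ∧
    (∀ C ∈ M14, ∀ D ∈ M14,
      indVec ({0, 1, 2} : Finset (Fin 9)) + indVec ({3, 4, 5} : Finset (Fin 9))
          = indVec C + indVec D →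
        ({C, D} : Set (Finset (Fin 9)))
          = {({0, 1, 2} : Finset (Fin 9)), ({3, 4, 5} : Finset (Fin 9))}) := by
  refine ⟨(mem_M14_iff _).2 (by decide +kernel), (mem_M14_iff _).2 (by decide +kernel), ?_, ?_⟩
  · intro h
    have m1 : indVec {0, 4, 5} ∈ P14 :=
      subset_convexHull ℝ _ ⟨_, (mem_M14_iff _).2 (by decide +kernel), rfl⟩
    have m2 : indVec {1, 3, 5} ∈ P14 :=
      subset_convexHull ℝ _ ⟨_, (mem_M14_iff _).2 (by decide +kernel), rfl⟩
    have m3 : indVec {2, 3, 4} ∈ P14 :=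
      subset_convexHull ℝ _ ⟨_, (mem_M14_iff _).2 (by decide +kernel), rfl⟩
    have m4 : (1 / 2 : ℝ) • indVec {1, 3, 5} + (1 / 2 : ℝ) • indVec {2, 3, 4} ∈ P14 :=
      (convex_convexHull ℝ _) m2 m3 (by norm_num) (by norm_num) (by norm_num)
    have hz : (1 / 3 : ℝ) • indVec {0, 1, 2} + (2 / 3 : ℝ) • indVec {3, 4, 5} ∈
        segment ℝ (indVec {0, 1, 2}) (indVec {3, 4, 5}) :=
      ⟨1 / 3, 2 / 3, by norm_num, by norm_num, by norm_num, rfl⟩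
    have ho : (1 / 3 : ℝ) • indVec {0, 1, 2} + (2 / 3 : ℝ) • indVec {3, 4, 5} ∈
        openSegment ℝ (indVec {0, 4, 5})
          ((1 / 2 : ℝ) • indVec {1, 3, 5} + (1 / 2 : ℝ) • indVec {2, 3, 4}) := by
      refine ⟨1 / 3, 2 / 3, by norm_num, by norm_num, by norm_num, ?_⟩
      funext i
      fin_cases i <;> simp [indVec] <;> norm_num
    obtain ⟨a, b, ha, hb, hab, he⟩ := h.left_mem_of_mem_openSegment m1 m4 hz ho
    have e0 := congrFun he 0
    have e1 := congrFun he 1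
    simp [indVec] at e0 e1
    linarith
  · intro C hC D hD h
    have key : ∀ v : Fin 9, (v ∈ C ∧ v ∉ D ∨ v ∉ C ∧ v ∈ D) ∧
        v ∈ ({0, 1, 2, 3, 4, 5} : Finset (Fin 9)) ∨
        v ∉ C ∧ v ∉ D ∧ v ∉ ({0, 1, 2, 3, 4, 5} : Finset (Fin 9)) := by
      intro v
      have hv := congrFun h v
      by_cases h1 : v ∈ C <;> by_cases h2 : v ∈ D <;> fin_cases v <;>
        simp [indVec] at h1 h2 hv <;> simp [h1, h2] at hv ⊢ <;> norm_num at hv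
    have hCs : C ∈ ({0, 1, 2, 3, 4, 5} : Finset (Fin 9)).powerset := by
      rw [Finset.mem_powerset]
      intro v hv
      have := key v
      tauto
    have hDe : D = ({0, 1, 2, 3, 4, 5} : Finset (Fin 9)) \ C := by
      ext v
      rw [Finset.mem_sdiff]
      have := key v
      tauto
    rw [mem_M14_iff] at hC hD
    rw [hDe] at hD
    rcases M14_split C hCs hC hD with rfl | rfl
    · have : D = {3, 4, 5} := by rw [hDe]; decide +kernel
      rw [this]
    · have : D = {0, 1, 2} := by rw [hDe]; decide +kernel
      rw [this, Set.pair_comm]
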